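/- Assume m < 0, let k ≥ 1 be an integer, and let j ≥ 0 be an integer. On the open set U := {z ∈ ℍ : Q_X(z) ≠ 0} define w(z) := 2|m|/p_z(X)² and f_j(z) := ( y^{−2} · conj(Q_X(z)) )^j · w(z)^{(k+j)/2} · ₂F₁( (k+j)/2, (k+j+1)/2; k + 1/2; w(z) ). Then on U one has R_{2j} f_j (z) = ( sgn(p_z(X)) / √(4N|m|) ) · (k+j) · f_{j+1}(z). -/

import Mathlib

open Complex ComplexConjugate Metric Set MeasureTheory

noncomputable section

/-- The upper half-plane, as a subset of `ℂ`. -/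
def UH : Set ℂ := {z | 0 < z.im}

/-- The Wirtinger derivative `∂f/∂z = (1/2)(∂f/∂x − i·∂f/∂y)`. -/
def dz (f : ℂ → ℂ) (z : ℂ) : ℂ :=
  (1 / 2 : ℂ) * (fderiv ℝ f z 1 - Complex.I * fderiv ℝ f z Complex.I)

/-- The Maass raising operator `R_κ f = 2i·∂f/∂z + (κ/y)·f`. -/
def raise (κ : ℝ) (f : ℂ → ℂ) : ℂ → ℂ :=
  fun z => 2 * Complex.I * dz f z + ((κ / z.im : ℝ) : ℂ) * f z

/-- The iterated raising operator `R_κⁿ = R_{κ+2n−2} ∘ ⋯ ∘ R_{κ+2} ∘ R_κ`. -/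
def raiseIter (κ : ℝ) : ℕ → (ℂ → ℂ) → (ℂ → ℂ)
  | 0 => fun f => f
  | n + 1 => fun f => raise (κ + 2 * n) (raiseIter κ n f)

/-- `m = (b² − 4Nac)/(4N)`, the value `q(X)` of the quadratic form at
`X = ((b/2N, c/N), (−a, −b/2N))`. -/
def mVal (N : ℕ) (a b c : ℝ) : ℝ := (b ^ 2 - 4 * N * a * c) / (4 * N)

/-- The quadratic polynomial `Q_X(z) = aNz² + bz + c`. -/
def Qx (N : ℕ) (a b c : ℝ) (z : ℂ) : ℂ := (a : ℂ) * (N : ℂ) * z ^ 2 + (b : ℂ) * z + (c : ℂ)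

/-- The quantity `p_z(X) = (aN|z|² + bx + c)/(√(2N)·y)`. -/
def pX (N : ℕ) (a b c : ℝ) (z : ℂ) : ℝ :=
  (a * N * Complex.normSq z + b * z.re + c) / (Real.sqrt (2 * N) * z.im)

/-- The argument `w(z) = 2|m|/p_z(X)²` of the hypergeometric series. -/
def wF (N : ℕ) (a b c : ℝ) (z : ℂ) : ℝ := 2 * |mVal N a b c| / (pX N a b c z) ^ 2

/-- The Gauss hypergeometric series `₂F₁(α, β; γ; w) = ∑ (α)ₙ(β)ₙ/((γ)ₙ n!) wⁿ`,
with `(α)ₙ` the ascending Pochhammer symbol. -/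
def gaussF (α β γ w : ℝ) : ℝ :=
  ∑' n : ℕ, (Polynomial.eval α (ascPochhammer ℝ n) * Polynomial.eval β (ascPochhammer ℝ n) /
    (Polynomial.eval γ (ascPochhammer ℝ n) * (n.factorial : ℝ))) * w ^ n

/-- The function `f_j(z) = (y^(−2)·conj(Q_X(z)))^j · w^((k+j)/2) ·
₂F₁((k+j)/2, (k+j+1)/2; k+1/2; w)`. -/
def fj (N : ℕ) (a b c : ℝ) (k j : ℕ) (z : ℂ) : ℂ :=
  (((z.im : ℂ) ^ (2 : ℕ))⁻¹ * conj (Qx N a b c z)) ^ j *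
    ((wF N a b c z ^ (((k : ℝ) + j) / 2) : ℝ) : ℂ) *
    ((gaussF (((k : ℝ) + j) / 2) (((k : ℝ) + j + 1) / 2) ((k : ℝ) + 1 / 2)
      (wF N a b c z) : ℝ) : ℂ)

/-!
Put `G = y⁻² · conj Q_X`. Since `√(2N) · p_z(X) = y⁻¹ · conj Q_X + i · conj Q_X'` and
antiholomorphic functions are constants for `∂/∂z`, both `∂G/∂z = (i/y) · G` and
`∂p/∂z = (i / (2√(2N))) · G`. Hence `R_{2j} (G ^ j · h(p)) = -(h'(p) / √(2N)) · G ^ (j + 1)` for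
every differentiable `h`: the weight `2j` cancels the derivative of `G ^ j`.

What remains is a derivative in one real variable. The classical formula
`(wˢ · ₂F₁(s, β; γ; w))' = s · wˢ⁻¹ · ₂F₁(s + 1, β; γ; w)` is applied to `w = 2|m| / p²`, and
`w ^ (1/2) = √(2|m|) / |p|` accounts for the sign of `p`.
-/

section PowerSeries

variable {𝕜 E F : Type*} [NontriviallyNormedField 𝕜] [NormedAddCommGroup E] [NormedSpace 𝕜 E]
  [NormedAddCommGroup F] [NormedSpace 𝕜 F] [CompleteSpace F]

lemma hasSum_nsmul_fderiv_apply_self {f : E → F} {p : FormalMultilinearSeries 𝕜 E F} {r : ENNReal}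
    (hf : HasFPowerSeriesOnBall f p 0 r) {x : E} (hx : x ∈ eball (0 : E) r) :
    HasSum (fun n : ℕ => n • p n fun _ => x) (fderiv 𝕜 f x x) := by
  have hderiv : HasSum (fun n : ℕ => p.derivSeries n (fun _ => x) x) (fderiv 𝕜 f x x) := by
    simpa only [zero_add, ContinuousLinearMap.apply_apply] using
      (ContinuousLinearMap.apply 𝕜 F x).hasSum (hf.fderiv.hasSum hx)
  simp only [FormalMultilinearSeries.derivSeries_apply_diag] at hderiv
  simpa using (hasSum_nat_add_iff (f := fun n : ℕ => n • p n fun _ => x) 1).mp hderiv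

end PowerSeries

section Hypergeometric

lemma add_natCast_mul_ascPochhammer_eval {R : Type*} [CommSemiring R] (a : R) (n : ℕ) :
    (a + n) * (ascPochhammer R n).eval a = a * (ascPochhammer R n).eval (a + 1) := by
  rw [mul_comm, ← ascPochhammer_succ_eval, ascPochhammer_succ_left]
  simp

variable {𝕂 : Type*} [RCLike 𝕂]

lemma one_le_radius_ordinaryHypergeometricSeries (𝔸 : Type*) [NormedDivisionRing 𝔸]
    [NormedAlgebra 𝕂 𝔸] (a b : 𝕂) {c : 𝕂} (hc : ∀ n : ℕ, (n : 𝕂) ≠ -c) :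
    1 ≤ (ordinaryHypergeometricSeries 𝔸 a b c).radius := by
  by_cases ha : ∃ n : ℕ, (n : 𝕂) = -a
  · obtain ⟨n, hn⟩ := ha
    obtain rfl : a = -n := by rw [hn, neg_neg]
    simp [ordinaryHypergeometric_radius_top_of_neg_nat₁]
  by_cases hb : ∃ n : ℕ, (n : 𝕂) = -b
  · obtain ⟨n, hn⟩ := hb
    obtain rfl : b = -n := by rw [hn, neg_neg]
    simp [ordinaryHypergeometric_radius_top_of_neg_nat₂]
  exact (ordinaryHypergeometricSeries_radius_eq_one 𝔸 a b c fun n =>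
    ⟨not_exists.mp ha n, not_exists.mp hb n, hc n⟩).ge

lemma hasFPowerSeriesOnBall_ordinaryHypergeometric (a b : 𝕂) {c : 𝕂}
    (hc : ∀ n : ℕ, (n : 𝕂) ≠ -c) :
    HasFPowerSeriesOnBall (ordinaryHypergeometric a b c : 𝕂 → 𝕂)
      (ordinaryHypergeometricSeries 𝕂 a b c) 0 1 :=
  have hradius := one_le_radius_ordinaryHypergeometricSeries 𝕂 a b hc
  (FormalMultilinearSeries.hasFPowerSeriesOnBall _ (one_pos.trans_le hradius)).mono one_pos hradius

lemma differentiableAt_ordinaryHypergeometric (a b : 𝕂) {c x : 𝕂} (hc : ∀ n : ℕ, (n : 𝕂) ≠ -c)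
    (hx : ‖x‖ < 1) : DifferentiableAt 𝕂 (ordinaryHypergeometric a b c) x := by
  have hball : x ∈ eball (0 : 𝕂) 1 := by simpa [← ENNReal.ofReal_one, eball_ofReal] using hx
  exact ((hasFPowerSeriesOnBall_ordinaryHypergeometric a b hc).analyticAt_of_mem
    hball).differentiableAt

lemma mul_deriv_ordinaryHypergeometric_add (a b : 𝕂) {c x : 𝕂} (hc : ∀ n : ℕ, (n : 𝕂) ≠ -c)
    (hx : ‖x‖ < 1) :
    x * deriv (ordinaryHypergeometric a b c) x + a * ordinaryHypergeometric a b c x =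
      a * ordinaryHypergeometric (a + 1) b c x := by
  have hball : x ∈ eball (0 : 𝕂) 1 := by simpa [← ENNReal.ofReal_one, eball_ofReal] using hx
  have hseries (a : 𝕂) := hasFPowerSeriesOnBall_ordinaryHypergeometric a b hc
  have hderiv := hasSum_nsmul_fderiv_apply_self (hseries a) hball
  have hsum := ((hseries a).hasSum hball).mul_left a
  have hsum_shift := ((hseries (a + 1)).hasSum hball).mul_left a
  rw [fderiv_eq_smul_deriv] at hderiv
  simp only [zero_add, smul_eq_mul, nsmul_eq_mul, ordinaryHypergeometricSeries_apply_eq]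
    at hderiv hsum hsum_shift
  rw [← (hderiv.add hsum).tsum_eq, ← hsum_shift.tsum_eq]
  refine tsum_congr fun n => ?_
  linear_combination ((n.factorial : 𝕂)⁻¹ * (ascPochhammer 𝕂 n).eval b *
    ((ascPochhammer 𝕂 n).eval c)⁻¹ * x ^ n) * add_natCast_mul_ascPochhammer_eval a n

lemma gaussF_eq_ordinaryHypergeometric (α β γ : ℝ) :
    gaussF α β γ = ordinaryHypergeometric α β γ := by
  ext w
  rw [gaussF, ordinaryHypergeometric_eq_tsum]
  refine tsum_congr fun n => ?_
  rw [smul_eq_mul]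
  ring

lemma gaussF_comm (α β γ : ℝ) : gaussF α β γ = gaussF β α γ := by
  ext w
  simp only [gaussF_eq_ordinaryHypergeometric, ordinaryHypergeometric,
    ordinaryHypergeometricSeries_symm α β γ]

lemma hasDerivAt_rpow_mul_gaussF (s β : ℝ) {γ w : ℝ} (hγ : ∀ n : ℕ, (n : ℝ) ≠ -γ)
    (hw : w ∈ Ioo (0 : ℝ) 1) :
    HasDerivAt (fun t => t ^ s * gaussF s β γ t) (s * w ^ (s - 1) * gaussF (s + 1) β γ w) w := by
  have hnorm : ‖w‖ < 1 := by rw [Real.norm_of_nonneg hw.1.le]; exact hw.2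
  have hF : HasDerivAt (gaussF s β γ) (deriv (gaussF s β γ) w) w := by
    rw [gaussF_eq_ordinaryHypergeometric]
    exact (differentiableAt_ordinaryHypergeometric s β hγ hnorm).hasDerivAt
  have hshift := mul_deriv_ordinaryHypergeometric_add s β hγ hnorm
  simp only [← gaussF_eq_ordinaryHypergeometric] at hshift
  have hpow : w ^ s = w ^ (s - 1) * w := by
    rw [Real.rpow_sub_one hw.1.ne', div_mul_cancel₀ _ hw.1.ne']
  refine ((Real.hasDerivAt_rpow_const (Or.inl hw.1.ne')).mul hF).congr_deriv ?_
  rw [hpow]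
  linear_combination w ^ (s - 1) * hshift

lemma inv_eq_sign_mul_inv_abs (x : ℝ) : x⁻¹ = Real.sign x * |x|⁻¹ := by
  rcases lt_trichotomy x 0 with hx | rfl | hx
  · rw [Real.sign_of_neg hx, abs_of_neg hx, inv_neg, neg_one_mul, neg_neg]
  · simp
  · rw [Real.sign_of_pos hx, abs_of_pos hx, one_mul]

lemma hasDerivAt_rpow_mul_gaussF_div_sq (s β : ℝ) {γ C p : ℝ} (hγ : ∀ n : ℕ, (n : ℝ) ≠ -γ)
    (hw : C / p ^ 2 ∈ Ioo (0 : ℝ) 1) :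
    HasDerivAt (fun t => (C / t ^ 2) ^ s * gaussF s β γ (C / t ^ 2))
      (-(2 * s * (Real.sign p / √C) *
        ((C / p ^ 2) ^ (s + 1 / 2) * gaussF (s + 1) β γ (C / p ^ 2)))) p := by
  have hp : p ≠ 0 := by rintro rfl; simp at hw
  have hC : 0 < C := by simpa [hp] using (div_pos_iff_of_pos_right (by positivity)).mp hw.1
  have hinner : HasDerivAt (fun t => C / t ^ 2) (-2 * (C / p ^ 2) * p⁻¹) p := by
    refine ((hasDerivAt_const p C).div (hasDerivAt_pow 2 p) (by positivity)).congr_deriv ?_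
    field_simp
    ring
  have hhalf : (C / p ^ 2) ^ (s + 1 / 2) = (C / p ^ 2) ^ s * (√C * |p|⁻¹) := by
    rw [Real.rpow_add hw.1, ← Real.sqrt_eq_rpow, Real.sqrt_div hC.le, Real.sqrt_sq_eq_abs,
      div_eq_mul_inv √C]
  refine ((hasDerivAt_rpow_mul_gaussF s β hγ hw).comp p hinner).congr_deriv ?_
  rw [hhalf, inv_eq_sign_mul_inv_abs p, Real.rpow_sub_one hw.1.ne']
  generalize (C / p ^ 2) ^ s = ws, gaussF (s + 1) β γ (C / p ^ 2) = F
  field_simp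

end Hypergeometric

section Wirtinger

/-- `f` is real-differentiable at `z` with Wirtinger derivative `∂f/∂z = d`. Differentiability is
part of the notion because `dz f z` is a junk value without it. -/
def HasDzAt (f : ℂ → ℂ) (d z : ℂ) : Prop :=
  DifferentiableAt ℝ f z ∧ dz f z = d

namespace HasDzAt

variable {f g : ℂ → ℂ} {d e z : ℂ}

lemma add (hf : HasDzAt f d z) (hg : HasDzAt g e z) : HasDzAt (fun z => f z + g z) (d + e) z := by
  obtain ⟨hf, rfl⟩ := hf
  obtain ⟨hg, rfl⟩ := hg
  refine ⟨hf.add hg, ?_⟩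
  simp only [dz, fderiv_fun_add hf hg, add_apply]
  ring

lemma mul (hf : HasDzAt f d z) (hg : HasDzAt g e z) :
    HasDzAt (fun z => f z * g z) (d * g z + f z * e) z := by
  obtain ⟨hf, rfl⟩ := hf
  obtain ⟨hg, rfl⟩ := hg
  refine ⟨hf.mul hg, ?_⟩
  simp only [dz, fderiv_fun_mul hf hg, add_apply, smul_apply, smul_eq_mul]
  ring

lemma pow (hf : HasDzAt f d z) (n : ℕ) :
    HasDzAt (fun z => f z ^ n) (n * f z ^ (n - 1) * d) z := by
  obtain ⟨hf, rfl⟩ := hf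
  refine ⟨hf.pow n, ?_⟩
  simp only [dz, fderiv_fun_pow n hf, smul_apply, nsmul_eq_mul, smul_eq_mul]
  ring

lemma congr_of_eventuallyEq (hf : HasDzAt f d z) (h : g =ᶠ[nhds z] f) : HasDzAt g d z :=
  ⟨hf.1.congr_of_eventuallyEq h, by rw [dz, h.fderiv_eq]; exact hf.2⟩

lemma ofReal_comp {u : ℂ → ℝ} {h : ℝ → ℝ} {h' : ℝ} (hh : HasDerivAt h h' (u z))
    (hu : HasDzAt (fun z => (u z : ℂ)) d z) : HasDzAt (fun z => (h (u z) : ℂ)) (h' * d) z := by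
  obtain ⟨hu, rfl⟩ := hu
  have hu_real : HasFDerivAt u (fderiv ℝ u z) z :=
    (reCLM.differentiableAt.comp z hu).hasFDerivAt
  have hu_complex : HasFDerivAt (fun z => (u z : ℂ)) (ofRealCLM.comp (fderiv ℝ u z)) z :=
    ofRealCLM.hasFDerivAt.comp z hu_real
  have hcomp : HasFDerivAt (fun z => (h (u z) : ℂ)) (ofRealCLM.comp (h' • fderiv ℝ u z)) z :=
    ofRealCLM.hasFDerivAt.comp z (hh.comp_hasFDerivAt z hu_real)
  refine ⟨hcomp.differentiableAt, ?_⟩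
  rw [dz, dz, hcomp.fderiv, hu_complex.fderiv]
  simp only [ContinuousLinearMap.comp_apply, smul_apply, ofRealCLM_apply, smul_eq_mul, ofReal_mul]
  ring

end HasDzAt

lemma hasDzAt_im (z : ℂ) : HasDzAt (fun z => (z.im : ℂ)) (-(I / 2)) z := by
  have him : HasFDerivAt (fun z : ℂ => (z.im : ℂ)) (ofRealCLM.comp imCLM) z :=
    (ofRealCLM.comp imCLM).hasFDerivAt
  refine ⟨him.differentiableAt, ?_⟩
  rw [dz, him.fderiv]
  simp only [ContinuousLinearMap.comp_apply, imCLM_apply, ofRealCLM_apply, one_im, I_im,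
    ofReal_zero, ofReal_one]
  ring

lemma hasDzAt_conj_comp {f : ℂ → ℂ} {z : ℂ} (hf : DifferentiableAt ℂ f z) :
    HasDzAt (fun z => conj (f z)) 0 z := by
  have hconj : HasFDerivAt (fun z => conj (f z))
      (conjCLE.toContinuousLinearMap.comp ((fderiv ℂ f z).restrictScalars ℝ)) z :=
    conjCLE.hasFDerivAt.comp z (hf.hasFDerivAt.restrictScalars ℝ)
  refine ⟨hconj.differentiableAt, ?_⟩
  have hI : fderiv ℂ f z I = I * fderiv ℂ f z 1 := by
    rw [← smul_eq_mul, ← map_smul, smul_eq_mul, mul_one]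
  rw [dz, hconj.fderiv]
  simp [hI, ← mul_assoc]

lemma hasDzAt_im_mul_conj {φ : ℝ → ℝ} {φ' : ℝ} {f : ℂ → ℂ} {z : ℂ} (hφ : HasDerivAt φ φ' z.im)
    (hf : DifferentiableAt ℂ f z) :
    HasDzAt (fun z => (φ z.im : ℂ) * conj (f z)) (-(I / 2) * φ' * conj (f z)) z := by
  have h := ((hasDzAt_im z).ofReal_comp hφ).mul (hasDzAt_conj_comp hf)
  convert h using 1
  ring

end Wirtinger

section Raising

/-- The weight-two factor `y⁻² · conj (Q_X(z))`, whose `j`-th power carries the weight of `f_j`. -/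
def weightTwoQ (N : ℕ) (a b c : ℝ) (z : ℂ) : ℂ :=
  ((z.im : ℂ) ^ (2 : ℕ))⁻¹ * conj (Qx N a b c z)

/-- The functions `(y⁻² · conj (Q_X(z))) ^ j · w(z) ^ s · ₂F₁(α, β; γ; w(z))`, with independent
parameters; `f_j` is the case `s = α = (k + j) / 2`, `β = α + 1 / 2`, `γ = k + 1 / 2`. -/
def hypForm (N : ℕ) (a b c : ℝ) (j : ℕ) (s α β γ : ℝ) (z : ℂ) : ℂ :=
  weightTwoQ N a b c z ^ j * ((wF N a b c z ^ s * gaussF α β γ (wF N a b c z) : ℝ) : ℂ)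

variable (N : ℕ) (a b c : ℝ)

lemma fj_eq_hypForm (k j : ℕ) : fj N a b c k j =
    hypForm N a b c j ((k + j) / 2) ((k + j) / 2) ((k + j) / 2 + 1 / 2) (k + 1 / 2) := by
  ext z
  rw [fj, hypForm, weightTwoQ, ← add_div, ofReal_mul, mul_assoc]

lemma fj_succ_eq_hypForm (k j : ℕ) : fj N a b c k (j + 1) =
    hypForm N a b c (j + 1) ((k + j) / 2 + 1 / 2) ((k + j) / 2 + 1) ((k + j) / 2 + 1 / 2)
      (k + 1 / 2) := by
  have hhalf : ((k : ℝ) + (j + 1 : ℕ)) / 2 = (k + j) / 2 + 1 / 2 := by push_cast; ring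
  have hone : ((k : ℝ) + j) / 2 + 1 / 2 + 1 / 2 = (k + j) / 2 + 1 := by ring
  ext z
  rw [fj_eq_hypForm, hhalf, hone, hypForm, hypForm, gaussF_comm]

variable {N a b c} in
lemma pX_sq (hN : 0 < N) {z : ℂ} (hz : z.im ≠ 0) :
    pX N a b c z ^ 2 = -2 * mVal N a b c + normSq (Qx N a b c z) / (2 * N * z.im ^ 2) := by
  rw [pX, div_pow, mul_pow, Real.sq_sqrt (by positivity), mVal]
  field_simp
  simp only [Qx, normSq_apply, pow_two, add_re, add_im, mul_re, mul_im, ofReal_re, ofReal_im,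
    natCast_re, natCast_im]
  ring

variable {N a b c} in
lemma wF_mem_Ioo (hN : 0 < N) (hm : mVal N a b c < 0) {z : ℂ} (hz : z.im ≠ 0)
    (hQ : Qx N a b c z ≠ 0) : wF N a b c z ∈ Ioo (0 : ℝ) 1 := by
  have hm_abs : 0 < 2 * |mVal N a b c| := mul_pos two_pos (abs_pos.mpr hm.ne)
  have hlt : 2 * |mVal N a b c| < pX N a b c z ^ 2 := by
    have hQ_pos : 0 < normSq (Qx N a b c z) / (2 * N * z.im ^ 2) :=
      div_pos (normSq_pos.mpr hQ) (by positivity)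
    rw [pX_sq hN hz, abs_of_neg hm]
    linarith
  have hp : 0 < pX N a b c z ^ 2 := hm_abs.trans hlt
  exact ⟨div_pos hm_abs hp, (div_lt_one hp).mpr hlt⟩

lemma differentiable_Qx : Differentiable ℂ (Qx N a b c) := by
  unfold Qx
  fun_prop

lemma hasDzAt_weightTwoQ {z : ℂ} (hz : z.im ≠ 0) :
    HasDzAt (weightTwoQ N a b c) (I / z.im * weightTwoQ N a b c z) z := by
  have hφ : HasDerivAt (fun y : ℝ => (y ^ 2)⁻¹) (-2 * (z.im ^ 3)⁻¹) z.im := by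
    refine ((hasDerivAt_pow 2 z.im).inv (by positivity)).congr_deriv ?_
    field_simp
    simp [mul_comm]
  convert hasDzAt_im_mul_conj hφ (differentiable_Qx N a b c z) using 1
  · ext z
    simp [weightTwoQ]
  · have hz' : (z.im : ℂ) ≠ 0 := ofReal_ne_zero.mpr hz
    rw [weightTwoQ]
    push_cast
    field_simp

lemma pX_eq_im_mul_conj_add_conj {z : ℂ} (hz : z.im ≠ 0) :
    (pX N a b c z : ℂ) = (((√(2 * N))⁻¹ * z.im⁻¹ : ℝ) : ℂ) * conj (Qx N a b c z) +
      conj (-I / (√(2 * N) : ℝ) * (2 * a * N * z + b)) := by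
  have hz' : (z.im : ℂ) ≠ 0 := ofReal_ne_zero.mpr hz
  have hnum : ((a * N * normSq z + b * z.re + c : ℝ) : ℂ) =
      conj (Qx N a b c z) + I * z.im * conj (2 * a * N * z + b) := by
    push_cast
    rw [← mul_conj, re_eq_add_conj, im_eq_sub_conj]
    simp only [Qx, map_add, map_mul, map_pow, conj_ofReal, map_natCast, map_ofNat]
    field_simp
    ring
  rw [pX, ofReal_div, hnum]
  simp only [map_mul, map_div₀, map_neg, conj_I, conj_ofReal]
  push_cast
  rw [← div_div, ← mul_inv]
  field_simp

lemma hasDzAt_pX {z : ℂ} (hz : z.im ≠ 0) :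
    HasDzAt (fun z => (pX N a b c z : ℂ)) (I / 2 / (√(2 * N) : ℝ) * weightTwoQ N a b c z) z := by
  have hφ : HasDerivAt (fun y : ℝ => (√(2 * N))⁻¹ * y⁻¹) ((√(2 * N))⁻¹ * -(z.im ^ 2)⁻¹) z.im :=
    (hasDerivAt_inv hz).const_mul _
  have hlin : DifferentiableAt ℂ
      (fun z : ℂ => -I / (√(2 * N) : ℝ) * (2 * a * N * z + b)) z := by fun_prop
  have hsum := (hasDzAt_im_mul_conj hφ (differentiable_Qx N a b c z)).add (hasDzAt_conj_comp hlin)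
  have heq : ∀ᶠ w : ℂ in nhds z, w.im ≠ 0 := continuous_im.continuousAt.eventually_ne hz
  convert hsum.congr_of_eventuallyEq (heq.mono fun w hw => pX_eq_im_mul_conj_add_conj N a b c hw)
    using 1
  rw [weightTwoQ]
  push_cast
  ring

lemma raise_weightTwoQ_pow_mul_comp_pX (j : ℕ) {h : ℝ → ℝ} {h' : ℝ} {z : ℂ} (hz : z.im ≠ 0)
    (hh : HasDerivAt h h' (pX N a b c z)) :
    raise (2 * j) (fun z => weightTwoQ N a b c z ^ j * (h (pX N a b c z) : ℂ)) z =
      -(h' / √(2 * N) : ℝ) * weightTwoQ N a b c z ^ (j + 1) := by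
  have hG := (hasDzAt_weightTwoQ N a b c hz).pow j
  have hpow : (j : ℂ) * weightTwoQ N a b c z ^ (j - 1) * (I / z.im * weightTwoQ N a b c z) =
      j * (I / z.im) * weightTwoQ N a b c z ^ j := by
    rcases j with _ | j
    · simp
    · rw [Nat.add_sub_cancel, pow_succ]
      ring
  rw [raise, (hG.mul ((hasDzAt_pX N a b c hz).ofReal_comp hh)).2, hpow]
  push_cast
  linear_combination (2 * j / z.im * weightTwoQ N a b c z ^ j * h (pX N a b c z) +
    h' / (√(2 * N) : ℝ) * weightTwoQ N a b c z ^ (j + 1)) * I_sq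

theorem raise_fj_general (j : ℕ) (s β : ℝ) {γ : ℝ} (hγ : ∀ n : ℕ, (n : ℝ) ≠ -γ) {z : ℂ}
    (hz : z.im ≠ 0) (hw : wF N a b c z ∈ Ioo (0 : ℝ) 1) :
    raise (2 * j) (hypForm N a b c j s s β γ) z =
      ((Real.sign (pX N a b c z) / √(4 * N * |mVal N a b c|) : ℝ) : ℂ) * (2 * s) *
        hypForm N a b c (j + 1) (s + 1 / 2) (s + 1) β γ z := by
  have hsqrt : √(4 * N * |mVal N a b c|) = √(2 * N) * √(2 * |mVal N a b c|) := by
    rw [← Real.sqrt_mul (by positivity)]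
    ring_nf
  have hraise := raise_weightTwoQ_pow_mul_comp_pX N a b c j hz
    (hasDerivAt_rpow_mul_gaussF_div_sq s β hγ hw)
  refine hraise.trans ?_
  rw [hypForm, wF, hsqrt]
  push_cast
  ring

end Raising

/-- For `m < 0`: `R_{2j} f_j = (sgn(p_z(X))/√(4N|m|))·(k+j)·f_{j+1}` on
`{z ∈ ℍ : Q_X(z) ≠ 0}`. -/
theorem raise_fj (N : ℕ) (hN : 1 ≤ N) (a b c : ℝ) (k j : ℕ) (hk : 1 ≤ k)
    (hm : mVal N a b c < 0) :
    ∀ z ∈ UH, Qx N a b c z ≠ 0 →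
      raise (2 * (j : ℝ)) (fj N a b c k j) z =
        ((Real.sign (pX N a b c z) / Real.sqrt (4 * N * |mVal N a b c|) : ℝ) : ℂ) *
          ((k : ℂ) + (j : ℂ)) * fj N a b c k (j + 1) z := by
  intro z hz hQ
  have hγ (n : ℕ) : (n : ℝ) ≠ -(k + 1 / 2) := by
    have : (0 : ℝ) ≤ n := n.cast_nonneg
    have : (0 : ℝ) ≤ k := k.cast_nonneg
    linarith
  have hz : z.im ≠ 0 := ne_of_gt hz
  rw [fj_eq_hypForm, fj_succ_eq_hypForm,
    raise_fj_general N a b c j _ _ hγ hz (wF_mem_Ioo hN hm hz hQ)]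
  push_cast
  ring
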